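/- Let Γ be a connected non-bipartite graph such that the vertex set of every odd cycle of Γ is a dominating set. Then H^1_m(R/I^t) ≠ 0 for some t ≥ 1 if and only if Γ has two disjoint maximal independent sets F, G such that the induced subgraph Γ_{F∪G} is connected. In this case, H^1_m(R/I^t) ≠ 0 for every t ≥ |F| + |G|. -/

import Mathlib

open MvPolynomial

noncomputable section

/-- The edge ideal of a graph `Γ` on vertex set `σ`, in `k[x_i : i ∈ σ]`. -/
def edgeIdeal (k : Type) [Field k] {σ : Type} (Γ : SimpleGraph σ) :
    Ideal (MvPolynomial σ k) :=
  Ideal.span { m | ∃ i j : σ, Γ.Adj i j ∧ m = X i * X j }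

/-- The maximal graded ideal `(x_i : i ∈ σ)` of `k[x_i : i ∈ σ]`. -/
def maxIdeal (k : Type) [Field k] (σ : Type) : Ideal (MvPolynomial σ k) :=
  Ideal.span (Set.range (X : σ → MvPolynomial σ k))

/-- `depth R/J = 0`, i.e. the maximal graded ideal is an associated prime of `R/J`. -/
def DepthZero (k : Type) [Field k] {σ : Type} (J : Ideal (MvPolynomial σ k)) : Prop :=
  maxIdeal k σ ∈ associatedPrimes (MvPolynomial σ k) (MvPolynomial σ k ⧸ J)

/-- The `i`-th local cohomology of `R/J` with support in the maximal graded ideal. -/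
def locCoh (k : Type) [Field k] {σ : Type} (J : Ideal (MvPolynomial σ k)) (i : ℕ) :=
  (localCohomology (maxIdeal k σ) i).obj (ModuleCat.of _ (MvPolynomial σ k ⧸ J))

/-- `depth R/J`, defined as the least `i` with `H^i_m(R/J) ≠ 0`. -/
def rDepth (k : Type) [Field k] {σ : Type} (J : Ideal (MvPolynomial σ k)) : ℕ :=
  sInf { i | Nontrivial (locCoh k J i) }

/-- A set `U` of vertices is dominating: every vertex outside `U` is adjacent to a
vertex of `U`. -/
def Dominating {σ : Type} (Γ : SimpleGraph σ) (U : Set σ) : Prop :=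
  ∀ v ∉ U, ∃ u ∈ U, Γ.Adj u v

/-- The closed neighborhood `N[v]` of a vertex. -/
def closedNbhd {σ : Type} (Γ : SimpleGraph σ) (v : σ) : Set σ :=
  insert v { u | Γ.Adj v u }

/-- The closed neighborhood `N[C]` of a set of vertices. -/
def closedNbhdSet {σ : Type} (Γ : SimpleGraph σ) (C : Set σ) : Set σ :=
  ⋃ v ∈ C, closedNbhd Γ v

/-- An odd cycle of length `m` (given as an injective map `ZMod m → σ` with consecutive
vertices adjacent) in `Γ`. -/
def IsOddCycle {σ : Type} (Γ : SimpleGraph σ) (m : ℕ) (c : ZMod m → σ) : Prop :=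
  Odd m ∧ 3 ≤ m ∧ Function.Injective c ∧ ∀ i, Γ.Adj (c i) (c (i + 1))

/-- `F` is an independent set of `Γ`. -/
def IsIndep {σ : Type} [Fintype σ] [DecidableEq σ] (Γ : SimpleGraph σ) (F : Finset σ) : Prop :=
  ∀ i ∈ F, ∀ j ∈ F, ¬ Γ.Adj i j

/-- `F` is a maximal independent set of `Γ`. -/
def IsMaxIndep {σ : Type} [Fintype σ] [DecidableEq σ] (Γ : SimpleGraph σ) (F : Finset σ) : Prop :=
  IsIndep Γ F ∧ ∀ G : Finset σ, IsIndep Γ G → F ⊆ G → G = F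

/-- The prime ideal `P_F = (x_i : i ∉ F)`. -/
def PF (k : Type) [Field k] {σ : Type} [Fintype σ] [DecidableEq σ] (F : Finset σ) :
    Ideal (MvPolynomial σ k) :=
  Ideal.span { m | ∃ i ∉ F, m = X i }

/-- The `t`-th symbolic power `I^{(t)} = ⋂_{F maximal independent} P_F^t` of the edge ideal. -/
def symbPow (k : Type) [Field k] {σ : Type} [Fintype σ] [DecidableEq σ]
    (Γ : SimpleGraph σ) (t : ℕ) : Ideal (MvPolynomial σ k) :=
  ⨅ F ∈ { F : Finset σ | IsMaxIndep Γ F }, PF k F ^ t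

/-- The monomial `x^a`. -/
def xPow (k : Type) [Field k] {σ : Type} [Fintype σ] (a : σ → ℕ) : MvPolynomial σ k :=
  ∏ i, X i ^ a i

/-- The localization `R[x_i^{-1} : i ∈ F]`. -/
abbrev locAt (k : Type) [Field k] {σ : Type} (F : Finset σ) :=
  Localization (Submonoid.closure ((fun i => (X i : MvPolynomial σ k)) '' (F : Set σ)))

/-- The degree complex `Δ_a(J) = {F : x^a ∉ J·R[x_i^{-1} : i ∈ F]}` of a monomial ideal `J`. -/
def degComplex (k : Type) [Field k] {σ : Type} [Fintype σ] (J : Ideal (MvPolynomial σ k))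
    (a : σ → ℕ) : Set (Finset σ) :=
  { F | algebraMap (MvPolynomial σ k) (locAt k F) (xPow k a) ∉
      J.map (algebraMap (MvPolynomial σ k) (locAt k F)) }

/-- `F` is a facet (maximal face) of the complex `Δ`. -/
def IsFacet {σ : Type} (Δ : Set (Finset σ)) (F : Finset σ) : Prop :=
  F ∈ Δ ∧ ∀ G ∈ Δ, F ⊆ G → G = F

/-- The complex `Δ` is disconnected: its vertex set splits into two nonempty parts such that
no face meets both. -/
def ComplexDisconnected {σ : Type} (Δ : Set (Finset σ)) : Prop :=
  ∃ A B : Set σ, A.Nonempty ∧ B.Nonempty ∧ Disjoint A B ∧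
    (∀ i, {i} ∈ Δ ↔ i ∈ A ∪ B) ∧
    ∀ F ∈ Δ, ¬ ((∃ i ∈ F, i ∈ A) ∧ (∃ j ∈ F, j ∈ B))

/-- The polynomial ring `R_v = k[x_i : i ≠ v]`. -/
abbrev Rv (k : Type) [Field k] {σ : Type} (v : σ) := MvPolynomial { i : σ // i ≠ v } k

/-- The localization `R[x_v^{-1}]`. -/
abbrev LocAway (k : Type) [Field k] {σ : Type} (v : σ) :=
  Localization.Away (X v : MvPolynomial σ k)

/-- For an ideal `I` of `R`, the ideal `I_v = I·R[x_v^{-1}] ∩ R_v` of `R_v`. -/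
def idealV (k : Type) [Field k] {σ : Type} (I : Ideal (MvPolynomial σ k)) (v : σ) :
    Ideal (Rv k v) :=
  Ideal.comap ((algebraMap (MvPolynomial σ k) (LocAway k v)).comp
      (MvPolynomial.rename (Subtype.val : { i : σ // i ≠ v } → σ)).toRingHom)
    (I.map (algebraMap (MvPolynomial σ k) (LocAway k v)))

/-- The edge ideal of the induced subgraph `Γ_U` in `k[x_i : i ∈ U]`. -/
def edgeIdealOn (k : Type) [Field k] {σ : Type} (Γ : SimpleGraph σ) (U : Set σ) :
    Ideal (MvPolynomial U k) :=
  Ideal.span { m | ∃ i j : U, Γ.Adj (i : σ) (j : σ) ∧ m = X i * X j }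

/-- `Γ` has no isolated vertices. -/
def NoIsolated {σ : Type} (Γ : SimpleGraph σ) : Prop :=
  ∀ v : σ, ∃ u : σ, Γ.Adj v u


section LCsec
universe u
namespace LC
open CategoryTheory Limits
variable {R : Type u} [CommRing R]

section abs
variable (K : ChainComplex (ModuleCat.{u} R)ᵒᵖ ℕ) {E : (ModuleCat.{u} R)ᵒᵖ} (i : E ≅ K.homology 1)

def Rel0 (f : (K.X 1).unop) (e : E.unop) : Prop :=
  ∃ z : (K.opcycles 1).unop, (K.pOpcycles 1).unop.hom z = f ∧
    (i.hom ≫ K.homologyι 1).unop.hom z = e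

lemma unop_app {A B C : (ModuleCat.{u} R)ᵒᵖ} (f : A ⟶ B) (g : B ⟶ C) (z : C.unop) :
    f.unop.hom (g.unop.hom z) = (f ≫ g).unop.hom z := rfl

lemma Rel0.surj (e : E.unop) : ∃ f, Rel0 K i f e := by
  obtain ⟨z, hz⟩ := (ModuleCat.epi_iff_surjective (i.hom ≫ K.homologyι 1).unop).1 inferInstance e
  exact ⟨_, z, rfl, hz⟩

lemma Rel0.d {f : (K.X 1).unop} {e : E.unop} (h : Rel0 K i f e) : (K.d 2 1).unop.hom f = 0 := by
  obtain ⟨z, rfl, -⟩ := h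
  rw [unop_app, HomologicalComplex.d_pOpcycles]
  rfl

lemma from_homι : (i.hom ≫ K.homologyι 1) ≫ K.fromOpcycles 1 0 = 0 := by
  rw [Category.assoc, HomologicalComplex.homologyι_comp_fromOpcycles, comp_zero]

lemma exact0 (z : (K.opcycles 1).unop) (h : (i.hom ≫ K.homologyι 1).unop.hom z = 0) :
    ∃ g, (K.fromOpcycles 1 0).unop.hom g = z := by
  have ex : (ShortComplex.mk _ _ (K.homologyι_comp_fromOpcycles 1 0)).Exact :=
    ShortComplex.exact_of_f_is_kernel _ (K.homologyIsKernel 1 0 (by simp))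
  have := (ShortComplex.moduleCat_exact_iff _).1 ex.unop
  refine this z ?_
  rw [← unop_app] at h
  have hi := (ModuleCat.mono_iff_injective i.hom.unop).1 inferInstance
  exact hi (h.trans (map_zero _).symm)

lemma exact1 (f : (K.X 1).unop) (h : (K.d 2 1).unop.hom f = 0) :
    ∃ z, (K.pOpcycles 1).unop.hom z = f := by
  have ex : (ShortComplex.mk _ _ (K.d_pOpcycles 2 1)).Exact :=
    ShortComplex.exact_of_g_is_cokernel _ (K.opcyclesIsCokernel 2 1 (by simp))
  have := (ShortComplex.moduleCat_exact_iff _).1 ex.unop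
  exact this f h

lemma Rel0.ex (f : (K.X 1).unop) (h : (K.d 2 1).unop.hom f = 0) : ∃ e, Rel0 K i f e := by
  obtain ⟨z, hz⟩ := exact1 K f h
  exact ⟨_, z, hz, rfl⟩

lemma Rel0.add_d {f : (K.X 1).unop} {e : E.unop} (h : Rel0 K i f e) (g : (K.X 0).unop) :
    Rel0 K i (f + (K.d 1 0).unop.hom g) e := by
  obtain ⟨z, rfl, rfl⟩ := h
  refine ⟨z + (K.fromOpcycles 1 0).unop.hom g, ?_, ?_⟩
  · rw [map_add, unop_app _ _ g, K.p_fromOpcycles]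
  · rw [map_add, unop_app _ _ g, from_homι]
    simp

lemma Rel0.zero_iff {f : (K.X 1).unop} {e : E.unop} (h : Rel0 K i f e) :
    e = 0 ↔ ∃ g, f = (K.d 1 0).unop.hom g := by
  constructor
  · rintro rfl
    obtain ⟨z, rfl, hz⟩ := h
    obtain ⟨g, rfl⟩ := exact0 K i z hz
    exact ⟨g, by rw [unop_app, K.p_fromOpcycles]⟩
  · rintro ⟨g, rfl⟩
    obtain ⟨z, hz, rfl⟩ := h
    rw [← K.p_fromOpcycles, ← unop_app] at hz
    have := (ModuleCat.mono_iff_injective (K.pOpcycles 1).unop).1 inferInstance hz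
    rw [this, unop_app, from_homι]
    rfl

lemma Rel0.map {K' : ChainComplex (ModuleCat.{u} R)ᵒᵖ ℕ} {E' : (ModuleCat.{u} R)ᵒᵖ}
    (i' : E' ≅ K'.homology 1) (Φ : K ⟶ K') (v : E ⟶ E')
    (h : v ≫ i'.hom = i.hom ≫ HomologicalComplex.homologyMap Φ 1)
    {f : (K'.X 1).unop} {e : E'.unop} (h : Rel0 K' i' f e) :
    Rel0 K i ((Φ.f 1).unop.hom f) (v.unop.hom e) := by
  obtain ⟨z, rfl, rfl⟩ := h
  refine ⟨(HomologicalComplex.opcyclesMap Φ 1).unop.hom z, ?_, ?_⟩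
  · rw [unop_app, unop_app, HomologicalComplex.p_opcyclesMap]
  · rw [unop_app, unop_app, ← Category.assoc, h, Category.assoc, Category.assoc,
      HomologicalComplex.homologyι_naturality]

end abs

abbrev yF (Y : ModuleCat.{u} R) : ModuleCat.{u} R ⥤ (ModuleCat.{u} R)ᵒᵖ :=
  ((linearYoneda R (ModuleCat.{u} R)).obj Y).rightOp

abbrev yK {X : ModuleCat.{u} R} (P : ProjectiveResolution X) (Y : ModuleCat.{u} R) :
    ChainComplex (ModuleCat.{u} R)ᵒᵖ ℕ :=
  ((yF Y).mapHomologicalComplex _).obj P.complex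

abbrev E1 (X Y : ModuleCat.{u} R) : ModuleCat.{u} R :=
  ((Ext R (ModuleCat.{u} R) 1).obj (Opposite.op X)).obj Y

def Rel {X : ModuleCat.{u} R} (P : ProjectiveResolution X) {Y : ModuleCat.{u} R}
    (f : P.complex.X 1 ⟶ Y) (e : E1 X Y) : Prop :=
  Rel0 (yK P Y) (P.isoLeftDerivedObj (yF Y) 1) f e

variable {X : ModuleCat.{u} R} (P : ProjectiveResolution X) {Y : ModuleCat.{u} R}

lemma Rel.surj (e : E1 X Y) : ∃ f, Rel P f e :=
  Rel0.surj (yK P Y) (P.isoLeftDerivedObj (yF Y) 1) e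

lemma Rel.d {f : P.complex.X 1 ⟶ Y} {e : E1 X Y} (h : Rel P f e) : P.complex.d 2 1 ≫ f = 0 :=
  Rel0.d _ _ h

lemma Rel.ex (f : P.complex.X 1 ⟶ Y) (h : P.complex.d 2 1 ≫ f = 0) : ∃ e, Rel P f e :=
  Rel0.ex _ _ _ h

lemma Rel.add_d {f : P.complex.X 1 ⟶ Y} {e : E1 X Y} (h : Rel P f e) (g : P.complex.X 0 ⟶ Y) :
    Rel P (f + P.complex.d 1 0 ≫ g) e := Rel0.add_d _ _ h g

lemma Rel.zero_iff {f : P.complex.X 1 ⟶ Y} {e : E1 X Y} (h : Rel P f e) :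
    e = 0 ↔ ∃ g, f = P.complex.d 1 0 ≫ g := Rel0.zero_iff _ _ h

lemma Rel.map {X' : ModuleCat.{u} R} (u : X ⟶ X') (Q : ProjectiveResolution X')
    (φ : P.complex ⟶ Q.complex) (comm : φ.f 0 ≫ Q.π.f 0 = P.π.f 0 ≫ u)
    {f : Q.complex.X 1 ⟶ Y} {e : E1 X' Y} (h : Rel Q f e) :
    Rel P (φ.f 1 ≫ f) ((((Ext R (ModuleCat.{u} R) 1).map u.op).app Y).hom e) :=
  Rel0.map _ _ _ (((yF Y).mapHomologicalComplex _).map φ) (((yF Y).leftDerived 1).map u)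
    (ProjectiveResolution.isoLeftDerivedObj_hom_naturality u P Q φ comm (yF Y) 1) h


section ideal
variable {I : Ideal R} {M : ModuleCat.{u} R}

abbrev QI (I : Ideal R) : ModuleCat.{u} R := ModuleCat.of R (R ⧸ I)

def pi0 (P : ProjectiveResolution X) : P.complex.X 0 ⟶ X := P.π.f 0

lemma d_pi0 (P : ProjectiveResolution X) : P.complex.d 1 0 ≫ pi0 P = 0 :=
  P.complex_d_comp_π_f_zero

lemma pi0_surj (P : ProjectiveResolution X) : Function.Surjective (pi0 P).hom :=
  (ModuleCat.epi_iff_surjective (P.π.f 0)).1 inferInstance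

lemma ex_pi0 (P : ProjectiveResolution X) (p : P.complex.X 0) (h : (pi0 P).hom p = 0) :
    ∃ q, (P.complex.d 1 0).hom q = p :=
  (ShortComplex.moduleCat_exact_iff _).1 P.exact₀ p h

lemma d_pi0_app (P : ProjectiveResolution X) (p : P.complex.X 1) :
    (pi0 P).hom ((P.complex.d 1 0).hom p) = 0 :=
  congrArg (fun t => t.hom p) (d_pi0 P)

lemma ex_d (P : ProjectiveResolution X) (p : P.complex.X 1) (h : (P.complex.d 1 0).hom p = 0) :
    ∃ q, (P.complex.d 2 1).hom q = p :=
  (ShortComplex.moduleCat_exact_iff _).1 (P.exact_succ 0) p h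

def RelI (I : Ideal R) (φ : I →ₗ[R] M) (e : E1 (QI I) M) : Prop :=
  ∃ (P : ProjectiveResolution (QI I)) (α : P.complex.X 0 →ₗ[R] R),
    (∀ p, Ideal.Quotient.mk I (α p) = (pi0 P).hom p) ∧
    ∃ f : P.complex.X 1 ⟶ M, Rel P f e ∧
      ∀ p, ∃ h : α ((P.complex.d 1 0).hom p) ∈ I, f.hom p = φ ⟨_, h⟩

lemma exα (P : ProjectiveResolution (QI I)) : ∃ α : P.complex.X 0 →ₗ[R] R,
    (∀ p, Ideal.Quotient.mk I (α p) = (pi0 P).hom p) := by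
  have : Module.Projective R (P.complex.X 0) :=
    (IsProjective.iff_projective _ ).2 (P.projective 0)
  obtain ⟨α, hα⟩ := Module.projective_lifting_property I.mkQ (pi0 P).hom (Submodule.mkQ_surjective I)
  exact ⟨α, fun p => LinearMap.congr_fun hα p⟩

lemma exβ (P : ProjectiveResolution (QI I)) : ∃ β : R →ₗ[R] P.complex.X 0,
    (∀ r, (pi0 P).hom (β r) = Ideal.Quotient.mk I r) := by
  obtain ⟨p, hp⟩ := pi0_surj P (Ideal.Quotient.mk I 1)
  refine ⟨LinearMap.toSpanSingleton R _ p, fun r => ?_⟩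
  rw [LinearMap.toSpanSingleton_apply, map_smul, hp]
  change r • Submodule.Quotient.mk (1:R) = Submodule.Quotient.mk r
  rw [← Submodule.Quotient.mk_smul]; simp

lemma α_mem {P : ProjectiveResolution (QI I)} {α : P.complex.X 0 →ₗ[R] R}
    (hα : ∀ p, Ideal.Quotient.mk I (α p) = (pi0 P).hom p) (p : P.complex.X 0)
    (h : (pi0 P).hom p = 0) : α p ∈ I := by
  rw [← Ideal.Quotient.eq_zero_iff_mem, hα, h]

lemma exf (φ : I →ₗ[R] M) {P : ProjectiveResolution (QI I)} {α : P.complex.X 0 →ₗ[R] R}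
    (hα : ∀ p, Ideal.Quotient.mk I (α p) = (pi0 P).hom p) : ∃ f : P.complex.X 1 ⟶ M,
      P.complex.d 2 1 ≫ f = 0 ∧
      ∀ p, ∃ h : α ((P.complex.d 1 0).hom p) ∈ I, f.hom p = φ ⟨_, h⟩ := by
  have hm : ∀ p, (α ∘ₗ (P.complex.d 1 0).hom) p ∈ I := fun p => α_mem hα _ (d_pi0_app P p)
  refine ⟨ModuleCat.ofHom (φ ∘ₗ LinearMap.codRestrict I (α ∘ₗ (P.complex.d 1 0).hom) hm),
    ?_, fun p => ⟨hm p, rfl⟩⟩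
  ext p
  have : (P.complex.d 1 0).hom ((P.complex.d 2 1).hom p) = 0 :=
    congrArg (fun t => t.hom p) (P.complex.d_comp_d 2 1 0)
  change φ (LinearMap.codRestrict I (α ∘ₗ (P.complex.d 1 0).hom) hm ((P.complex.d 2 1).hom p)) = 0
  have h2 : LinearMap.codRestrict I (α ∘ₗ (P.complex.d 1 0).hom) hm ((P.complex.d 2 1).hom p) = 0 := by
    ext
    simp [this]
  rw [h2, map_zero]

lemma RelI.ex (φ : I →ₗ[R] M) : ∃ e, RelI I φ e := by
  let P := projectiveResolution (QI I)
  obtain ⟨α, hα⟩ := exα P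
  obtain ⟨f, hd, hf⟩ := exf φ hα
  obtain ⟨e, he⟩ := Rel.ex P f hd
  exact ⟨e, P, α, hα, f, he, hf⟩

lemma RelI.zero_iff {φ : I →ₗ[R] M} {e : E1 (QI I) M} (h : RelI I φ e) :
    e = 0 ↔ ∃ x : M, ∀ r : I, φ r = (r : R) • x := by
  obtain ⟨P, α, hα, f, hr, hf⟩ := h
  rw [Rel.zero_iff P hr]
  constructor
  · rintro ⟨g, rfl⟩
    obtain ⟨β, hβ⟩ := exβ P
    have hm : ∀ r, (α ∘ₗ β - LinearMap.id : R →ₗ[R] R) r ∈ I := fun r => by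
      rw [← Ideal.Quotient.eq_zero_iff_mem]
      simp [hα, hβ]
    let ψ : R →ₗ[R] M := g.hom ∘ₗ β - φ ∘ₗ LinearMap.codRestrict I _ hm
    refine ⟨ψ 1, fun r => ?_⟩
    rw [← map_smul]
    have h0 : (pi0 P).hom (β r) = 0 := by
      rw [hβ, Ideal.Quotient.eq_zero_iff_mem]; exact r.2
    obtain ⟨q, hq⟩ := ex_pi0 P _ h0
    obtain ⟨h, hfq⟩ := hf q
    have e1 : g.hom (β r) = φ ⟨_, h⟩ := by
      rw [← hfq, ← hq]; rfl
    have : ψ r = φ r := by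
      simp only [ψ, LinearMap.sub_apply, LinearMap.comp_apply]
      rw [e1, ← map_sub]
      congr 1
      ext
      simp [hq]
    rw [← this]; simp
  · rintro ⟨x, hx⟩
    refine ⟨ModuleCat.ofHom (LinearMap.toSpanSingleton R M x ∘ₗ α), ?_⟩
    ext p
    obtain ⟨h, hfp⟩ := hf p
    rw [hfp, hx]; rfl

lemma RelI.surj (e : E1 (QI I) M) : ∃ φ, RelI I φ e := by
  let P := projectiveResolution (QI I)
  obtain ⟨α, hα⟩ := exα P
  obtain ⟨β, hβ⟩ := exβ P
  obtain ⟨f, hf⟩ := Rel.surj P e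
  -- K = ker pi0
  let K := LinearMap.ker (pi0 P).hom
  let dK : P.complex.X 1 →ₗ[R] K := LinearMap.codRestrict K (P.complex.d 1 0).hom
    (fun p => d_pi0_app P p)
  have dKs : Function.Surjective dK := fun ⟨p, hp⟩ => by
    obtain ⟨q, hq⟩ := ex_pi0 P p hp
    exact ⟨q, Subtype.ext hq⟩
  have hker : LinearMap.ker dK ≤ LinearMap.ker f.hom := by
    intro p hp
    have : (P.complex.d 1 0).hom p = 0 := congrArg Subtype.val (LinearMap.mem_ker.1 hp)
    obtain ⟨q, rfl⟩ := ex_d P p this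
    exact congrArg (fun t => t.hom q) (Rel.d P hf)
  let fK : K →ₗ[R] M := (LinearMap.ker dK).liftQ f.hom hker ∘ₗ
    (dK.quotKerEquivOfSurjective dKs).symm.toLinearMap
  have hfK : ∀ p, fK (dK p) = f.hom p := fun p => by
    have : (dK.quotKerEquivOfSurjective dKs).symm (dK p) = Submodule.Quotient.mk p := by
      rw [LinearEquiv.symm_apply_eq]; rfl
    change (LinearMap.ker dK).liftQ f.hom hker ((dK.quotKerEquivOfSurjective dKs).symm (dK p)) = _
    rw [this]; rfl
  have hβm : ∀ r : I, (β ∘ₗ I.subtype) r ∈ K := fun r => by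
    change (pi0 P).hom (β r) = 0
    rw [hβ, Ideal.Quotient.eq_zero_iff_mem]; exact r.2
  let φ : I →ₗ[R] M := fK ∘ₗ LinearMap.codRestrict K _ hβm
  have hm : ∀ p, (β ∘ₗ α - LinearMap.id : P.complex.X 0 →ₗ[R] P.complex.X 0) p ∈ K := fun p => by
    change (pi0 P).hom (β (α p) - p) = 0
    rw [map_sub, hβ, hα, sub_self]
  let g : P.complex.X 0 ⟶ M := ModuleCat.ofHom (fK ∘ₗ LinearMap.codRestrict K _ hm)
  refine ⟨φ, P, α, hα, _, Rel.add_d P hf g, fun p => ?_⟩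
  have hmem := α_mem hα _ (d_pi0_app P p)
  refine ⟨hmem, ?_⟩
  change f.hom p + fK (LinearMap.codRestrict K _ hm ((P.complex.d 1 0).hom p)) =
    fK (LinearMap.codRestrict K _ hβm ⟨_, hmem⟩)
  rw [← hfK, ← map_add]
  congr 1
  ext
  change (P.complex.d 1 0).hom p + (β (α ((P.complex.d 1 0).hom p)) - (P.complex.d 1 0).hom p) = _
  rw [add_sub_cancel]
  rfl

def mapQI {I I' : Ideal R} (h : I ≤ I') : QI I ⟶ QI I' :=
  ModuleCat.ofHom <| Submodule.mapQ _ _ LinearMap.id h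

lemma RelI.map {I' : Ideal R} (hI : I ≤ I') {φ : I' →ₗ[R] M} {e : E1 (QI I') M}
    (h : RelI I' φ e) :
    RelI I (φ ∘ₗ Submodule.inclusion hI)
      ((((Ext R (ModuleCat.{u} R) 1).map (mapQI hI).op).app M).hom e) := by
  obtain ⟨Q, α', hα', f, hr, hf⟩ := h
  let P := projectiveResolution (QI I)
  obtain ⟨α, hα⟩ := exα P
  have comm : (ProjectiveResolution.lift (mapQI hI) P Q).f 0 ≫ Q.π.f 0 = P.π.f 0 ≫ mapQI hI :=
    ProjectiveResolution.lift_commutes_zero (mapQI hI) P Q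
  have h2 := Rel.map P _ Q _ comm hr
  set ψ := ProjectiveResolution.lift (mapQI hI) P Q
  have comm' : ∀ p, (pi0 Q).hom ((ψ.f 0).hom p) = (mapQI hI).hom ((pi0 P).hom p) := fun p =>
    congrArg (fun t => t.hom p) comm
  have hm : ∀ p, (α - α' ∘ₗ (ψ.f 0).hom) p ∈ I' := fun p => by
    rw [← Ideal.Quotient.eq_zero_iff_mem, LinearMap.sub_apply, map_sub, LinearMap.comp_apply, hα',
      comm', ← hα, sub_eq_zero]
    rfl
  refine ⟨P, α, hα, _, Rel.add_d P h2 (ModuleCat.ofHom (φ ∘ₗ LinearMap.codRestrict I' _ hm)), fun p => ?_⟩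
  have hmem := α_mem hα _ (d_pi0_app P p)
  refine ⟨hmem, ?_⟩
  obtain ⟨h3, h4⟩ := hf ((ψ.f 1).hom p)
  change f.hom ((ψ.f 1).hom p) + φ (LinearMap.codRestrict I' _ hm ((P.complex.d 1 0).hom p)) =
    φ (Submodule.inclusion hI ⟨_, hmem⟩)
  rw [h4, ← map_add]
  congr 1
  ext
  have : (Q.complex.d 1 0).hom ((ψ.f 1).hom p) = (ψ.f 0).hom ((P.complex.d 1 0).hom p) :=
    congrArg (fun t => t.hom p) (ψ.comm 1 0)
  simp [this]

end ideal

theorem nontrivial_iff {R : Type} [CommRing R] (J : Ideal R) (M : ModuleCat.{0} R) :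
    Nontrivial ((localCohomology J 1).obj M) ↔
      ∃ (s : ℕ) (φ : (J ^ s : Ideal R) →ₗ[R] M), ∀ (s' : ℕ) (hs : s ≤ s') (x : M),
        ∃ r : (J ^ s' : Ideal R), φ (Submodule.inclusion (Ideal.pow_le_pow_right hs) r) ≠ (r : R) • x := by
  have := localCohomology.hasColimitDiagram.{0, 0} (localCohomology.idealPowersDiagram J) 1
  let D := localCohomology.diagram (localCohomology.idealPowersDiagram J) 1
  let hc := isColimitOfPreserves ((evaluation (ModuleCat.{0} R) (ModuleCat.{0} R)).obj M)
    (colimit.isColimit D)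
  have e1 := fun x => Concrete.isColimit_exists_rep _ hc x
  have e2 := fun {i j} (x) (y) => Concrete.isColimit_rep_eq_iff_exists.{0} _ hc (i := i) (j := j) x y
  let S := (localCohomology J 1).obj M
  have f1 : ∀ x : S, ∃ (s : ℕ) (e : E1 (QI (J ^ s)) M),
    (((colimit.ι D (Opposite.op (Opposite.op s))).app M).hom e : S) = x := fun x => by
    obtain ⟨j, y, h⟩ := e1 x
    exact ⟨j.unop.unop, y, h⟩
  have f2 : ∀ (s : ℕ) (e : E1 (QI (J ^ s)) M),
    (((colimit.ι D (Opposite.op (Opposite.op s))).app M).hom e : S) = 0 ↔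
      ∃ s', ∃ h : s ≤ s', (((Ext R (ModuleCat.{0} R) 1).map (mapQI (Ideal.pow_le_pow_right h : J ^ s' ≤ J ^ s)).op).app M).hom e = 0 := by
    intro s e
    have h0 : (((colimit.ι D (Opposite.op (Opposite.op s))).app M).hom (0 : E1 (QI (J ^ s)) M) : S) = 0 := map_zero _
    have := e2 (i := Opposite.op (Opposite.op s)) (j := Opposite.op (Opposite.op s)) e (0 : E1 (QI (J ^ s)) M)
    constructor
    · intro h
      obtain ⟨k, f, g, hk⟩ := this.1 (h.trans h0.symm)
      refine ⟨k.unop.unop, f.unop.unop.down.down, ?_⟩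
      refine Eq.trans ?_ (hk.trans (map_zero _))
      rfl
    · rintro ⟨s', h, hh⟩
      refine (this.2 ⟨Opposite.op (Opposite.op s'), (homOfLE h).op.op, (homOfLE h).op.op, ?_⟩).trans h0
      refine Eq.trans ?_ (hh.trans (map_zero _).symm)
      rfl
  constructor
  · intro h
    obtain ⟨x, hx⟩ := exists_ne (0 : S)
    obtain ⟨s, e, rfl⟩ := f1 x
    have hx := mt (f2 s e).2 hx
    push Not at hx
    obtain ⟨φ, hφ⟩ := RelI.surj e
    refine ⟨s, φ, fun s' hs x => ?_⟩
    by_contra! hcon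
    exact hx s' hs ((RelI.zero_iff (hφ.map (Ideal.pow_le_pow_right hs))).2 ⟨x, hcon⟩)
  · rintro ⟨s, φ, h⟩
    obtain ⟨e, he⟩ := RelI.ex φ
    refine ⟨((colimit.ι D (Opposite.op (Opposite.op s))).app M).hom e, (0 : S), ?_⟩
    refine mt (f2 s e).1 ?_
    rintro ⟨s', hs, h0⟩
    obtain ⟨x, hx⟩ := (RelI.zero_iff (he.map (Ideal.pow_le_pow_right hs))).1 h0
    obtain ⟨r, hr⟩ := h s' hs x
    exact hr (hx r)
end LC

end LCsec


section comb
variable {σ : Type}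

inductive ES (Γ : SimpleGraph σ) : ℕ → (σ →₀ ℕ) → Prop
  | zero : ES Γ 0 0
  | succ {t : ℕ} {b : σ →₀ ℕ} {i j : σ} : ES Γ t b → Γ.Adj i j →
      ES Γ (t + 1) (b + (Finsupp.single i 1 + Finsupp.single j 1))

lemma ES.edge {Γ : SimpleGraph σ} {i j : σ} (h : Γ.Adj i j) :
    ES Γ 1 (Finsupp.single i 1 + Finsupp.single j 1) := by
  simpa using ES.succ ES.zero h

lemma ES.add {Γ : SimpleGraph σ} {s t : ℕ} {a b : σ →₀ ℕ} (ha : ES Γ s a) (hb : ES Γ t b) :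
    ES Γ (s + t) (a + b) := by
  induction hb with
  | zero => simpa using ha
  | succ _ h ih =>
    rw [← add_assoc, ← add_assoc]
    exact ES.succ ih h

lemma ES.nsmul {Γ : SimpleGraph σ} {s : ℕ} {a : σ →₀ ℕ} (ha : ES Γ s a) (n : ℕ) :
    ES Γ (n * s) (n • a) := by
  induction n with
  | zero => simpa using ES.zero
  | succ n ih => rw [add_mul, one_mul, add_smul, one_smul]; exact ih.add ha

lemma ES.sum {Γ : SimpleGraph σ} {ι : Type*} (S : Finset ι) (t : ι → ℕ) (a : ι → σ →₀ ℕ)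
    (h : ∀ i ∈ S, ES Γ (t i) (a i)) : ES Γ (∑ i ∈ S, t i) (∑ i ∈ S, a i) := by
  classical
  induction S using Finset.induction_on with
  | empty => simpa using ES.zero
  | insert i S hi ih =>
    rw [Finset.sum_insert hi, Finset.sum_insert hi]
    exact (h i (by simp)).add (ih fun j hj => h j (by simp [hj]))

lemma ES.mono {Γ Γ' : SimpleGraph σ} (hΓ : Γ ≤ Γ') {t : ℕ} {b : σ →₀ ℕ} (h : ES Γ t b) :
    ES Γ' t b := by
  induction h with
  | zero => exact ES.zero
  | succ _ h ih => exact ES.succ ih (hΓ h)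

lemma ES.le {Γ : SimpleGraph σ} {t : ℕ} {b : σ →₀ ℕ} (h : ES Γ t b) :
    ∀ s ≤ t, ∃ c ≤ b, ES Γ s c := by
  induction h with
  | zero => intro s hs; obtain rfl : s = 0 := by omega
            exact ⟨0, le_rfl, ES.zero⟩
  | @succ t b i j h' h ih =>
    intro s hs
    rcases Nat.lt_or_ge t s with h1 | h1
    · obtain rfl : s = t + 1 := by omega
      exact ⟨_, le_rfl, ES.succ h' h⟩
    · obtain ⟨c, hc, hE⟩ := ih s h1
      exact ⟨c, hc.trans (by simp), hE⟩

def InP (Γ : SimpleGraph σ) (t : ℕ) (b : σ →₀ ℕ) : Prop := ∃ c ≤ b, ES Γ t c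

lemma InP.mono {Γ : SimpleGraph σ} {t : ℕ} {a b : σ →₀ ℕ} (h : InP Γ t a) (hab : a ≤ b) :
    InP Γ t b := by
  obtain ⟨c, hc, h⟩ := h
  exact ⟨c, hc.trans hab, h⟩

variable [Fintype σ] [DecidableEq σ]

/-- weight outside `F` -/
def wt (F : Finset σ) (a : σ →₀ ℕ) : ℕ := ∑ v ∈ Fᶜ, a v

lemma wt_add (F : Finset σ) (a b : σ →₀ ℕ) : wt F (a + b) = wt F a + wt F b := by
  simp [wt, Finset.sum_add_distrib]

lemma wt_single (F : Finset σ) (i : σ) (N : ℕ) :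
    wt F (Finsupp.single i N) = if i ∈ F then 0 else N := by
  simp only [wt, Finsupp.single_apply]
  simp

lemma wt_mono (F : Finset σ) {a b : σ →₀ ℕ} (h : a ≤ b) : wt F a ≤ wt F b :=
  Finset.sum_le_sum fun v _ => h v

lemma ES.wt {Γ : SimpleGraph σ} {F : Finset σ} (hF : IsIndep Γ F) {t : ℕ} {b : σ →₀ ℕ}
    (h : ES Γ t b) : t ≤ wt F b := by
  induction h with
  | zero => simp
  | @succ t b i j _ h ih =>
    rw [wt_add, wt_add, wt_single, wt_single]
    have := hF i
    split_ifs with h1 h2 h2 <;> first | omega | exact absurd h (hF i h1 j h2)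

lemma InP.wt {Γ : SimpleGraph σ} {F : Finset σ} (hF : IsIndep Γ F) {t : ℕ} {b : σ →₀ ℕ}
    (h : InP Γ t b) : t ≤ wt F b := by
  obtain ⟨c, hc, h⟩ := h
  exact (h.wt hF).trans (wt_mono F hc)

def inS (Γ : SimpleGraph σ) (t : ℕ) (a : σ →₀ ℕ) (i : σ) : Prop :=
  ∀ N, ¬ InP Γ t (a + Finsupp.single i N)

def inPair (Γ : SimpleGraph σ) (t : ℕ) (a : σ →₀ ℕ) (i j : σ) : Prop :=
  ∀ N, ¬ InP Γ t (a + Finsupp.single i N + Finsupp.single j N)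

lemma pair_of {Γ : SimpleGraph σ} {F : Finset σ} (hF : IsIndep Γ F) {t : ℕ} {a : σ →₀ ℕ}
    (h : wt F a < t) {i j : σ} (hi : i ∈ F) (hj : j ∈ F) : inPair Γ t a i j := by
  intro N hN
  have := hN.wt hF
  rw [wt_add, wt_add, wt_single, wt_single, if_pos hi, if_pos hj] at this
  omega

lemma exists_max {Γ : SimpleGraph σ} {F : Finset σ} (hF : IsIndep Γ F) :
    ∃ G, IsMaxIndep Γ G ∧ F ⊆ G := by
  obtain ⟨G, hFG, hG⟩ := (Set.toFinite {F : Finset σ | IsIndep Γ F}).exists_le_maximal hF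
  exact ⟨G, ⟨hG.1, fun H hH hGH => Finset.Subset.antisymm (hG.2 hH hGH) hGH⟩, hFG⟩

lemma IsMaxIndep.adj {Γ : SimpleGraph σ} {F : Finset σ} (hF : IsMaxIndep Γ F) {j : σ}
    (hj : j ∉ F) : ∃ i ∈ F, Γ.Adj i j := by
  by_contra! hcon
  have : IsIndep Γ (insert j F) := by
    intro a ha b hb
    rw [Finset.mem_insert] at ha hb
    rcases ha with rfl | ha <;> rcases hb with rfl | hb
    · exact Γ.irrefl
    · exact fun h => hcon b hb h.symm
    · exact hcon a ha
    · exact hF.1 a ha b hb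
  have := hF.2 _ this (Finset.subset_insert _ _)
  exact hj (this ▸ Finset.mem_insert_self _ _)

/-- weighted König -/
lemma konig (Γ : SimpleGraph σ) (W : Finset σ) (col : σ → Prop)
    (hcol : ∀ u ∈ W, ∀ v ∈ W, Γ.Adj u v → (col u ↔ ¬ col v)) (a : σ → ℕ) (s : ℕ)
    (hC : ∀ C ⊆ W, (∀ u ∈ W, ∀ v ∈ W, Γ.Adj u v → u ∈ C ∨ v ∈ C) → s ≤ ∑ v ∈ C, a v) :
    ∃ s' ≥ s, ∃ c : σ →₀ ℕ, ES Γ s' c ∧ ∀ v, c v ≤ if v ∈ W then a v else 0 := by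
  classical
  let A := W.filter col
  let A' := A.sigma fun v => Finset.range (a v)
  have hA' : A'.card = ∑ v ∈ A, a v := by simp [A']
  have hs : s ≤ A'.card := by
    rw [hA']
    refine hC A (Finset.filter_subset _ _) fun u hu v hv h => ?_
    have := hcol u hu v hv h
    simp only [A, Finset.mem_filter, hu, hv, true_and]
    tauto
  let d := A'.card - s
  let NN : σ → Finset σ := fun v => W.filter fun w => Γ.Adj v w
  let T : A' → Finset ((Σ _ : σ, ℕ) ⊕ ℕ) := fun x =>
    ((NN x.1.1).sigma fun w => Finset.range (a w)).disjSum (Finset.range d)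
  have hall : ∀ S : Finset A', S.card ≤ (S.biUnion T).card := by
    intro S
    rcases S.eq_empty_or_nonempty with rfl | hS
    · simp
    let S0 := S.image fun x => x.1.1
    have hS0 : S0 ⊆ A := by
      intro v hv
      obtain ⟨x, -, rfl⟩ := Finset.mem_image.1 hv
      exact (Finset.mem_sigma.1 x.2).1
    let N := S0.biUnion NN
    have hT : (N.sigma fun w => Finset.range (a w)).disjSum (Finset.range d) ⊆ S.biUnion T := by
      intro y hy
      rw [Finset.mem_biUnion]
      rcases y with y | y
      · simp only [Finset.inl_mem_disjSum, Finset.mem_sigma, N, Finset.mem_biUnion, S0,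
          Finset.mem_image] at hy
        obtain ⟨⟨v, ⟨x, hx, rfl⟩, h1⟩, h2⟩ := hy
        refine ⟨x, hx, ?_⟩
        simp only [T, Finset.inl_mem_disjSum, Finset.mem_sigma]
        exact ⟨h1, h2⟩
      · obtain ⟨x, hx⟩ := hS
        refine ⟨x, hx, ?_⟩
        simpa [T] using hy
    have c1 := Finset.card_le_card hT
    rw [Finset.card_disjSum, Finset.card_sigma, Finset.card_range] at c1
    simp only [Finset.card_range] at c1
    have c2 : S.card ≤ ∑ v ∈ S0, a v := by
      have : (S.image Subtype.val) ⊆ S0.sigma fun v => Finset.range (a v) := by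
        intro y hy
        obtain ⟨x, hx, rfl⟩ := Finset.mem_image.1 hy
        rw [Finset.mem_sigma]
        exact ⟨Finset.mem_image.2 ⟨x, hx, rfl⟩, (Finset.mem_sigma.1 x.2).2⟩
      have := Finset.card_le_card this
      rw [Finset.card_image_of_injective _ Subtype.val_injective, Finset.card_sigma] at this
      simpa using this
    have c3 := hC ((A \ S0) ∪ N) (by
      intro v hv
      rcases Finset.mem_union.1 hv with h | h
      · exact (Finset.mem_filter.1 (Finset.mem_sdiff.1 h).1).1
      · obtain ⟨u, -, h⟩ := Finset.mem_biUnion.1 h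
        exact (Finset.mem_filter.1 h).1) (by
      have key : ∀ u ∈ W, ∀ v ∈ W, Γ.Adj u v → col u → u ∈ (A \ S0) ∪ N ∨ v ∈ (A \ S0) ∪ N := by
        intro u hu v hv h hc
        by_cases hu0 : u ∈ S0
        · right
          exact Finset.mem_union_right _
            (Finset.mem_biUnion.2 ⟨u, hu0, Finset.mem_filter.2 ⟨hv, h⟩⟩)
        · left
          exact Finset.mem_union_left _ (Finset.mem_sdiff.2 ⟨Finset.mem_filter.2 ⟨hu, hc⟩, hu0⟩)
      intro u hu v hv h
      by_cases hc : col u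
      · exact key u hu v hv h hc
      · have : col v := by have := hcol u hu v hv h; tauto
        exact (key v hv u hu h.symm this).symm)
    have c4 : ∑ v ∈ (A \ S0) ∪ N, a v ≤ ∑ v ∈ A \ S0, a v + ∑ v ∈ N, a v := by
      rw [← Finset.sum_union_inter]; exact Nat.le_add_right _ _
    have c5 := Finset.sum_sdiff (f := a) hS0
    omega
  obtain ⟨f, hf, hfT⟩ := (Finset.all_card_le_biUnion_card_iff_exists_injective T).1 hall
  let X := Finset.univ.filter fun x : A' => (f x).isLeft
  have hX : ∀ x ∈ X, ∃ y, f x = Sum.inl y := fun x hx => by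
    have := (Finset.mem_filter.1 hx).2
    exact Sum.isLeft_iff.1 this
  have hXc : s ≤ X.card := by
    have h1 : (Finset.univ \ X).card ≤ d := by
      have : ((Finset.univ \ X).image f) ⊆ (Finset.range d).image Sum.inr := by
        intro y hy
        obtain ⟨x, hx, rfl⟩ := Finset.mem_image.1 hy
        have := hfT x
        rcases h : f x with z | z
        · simp [X, h] at hx
        · rw [h] at this
          simpa [T] using this
      have := Finset.card_le_card this
      rw [Finset.card_image_of_injective _ hf] at this
      exact this.trans (Finset.card_image_le.trans (by simp))
    have h2 := Finset.card_sdiff_add_card_eq_card (Finset.subset_univ X)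
    have h3 : (Finset.univ : Finset A').card = A'.card := by simp
    omega
  let g : A' → (Σ _ : σ, ℕ) := fun x => Sum.elim id (fun _ => ⟨x.1.1, 0⟩) (f x)
  have hg : ∀ x ∈ X, f x = Sum.inl (g x) := fun x hx => by
    obtain ⟨y, hy⟩ := hX x hx
    simp [g, hy]
  have hg2 : ∀ x ∈ X, (g x).1 ∈ W ∧ Γ.Adj x.1.1 (g x).1 ∧ (g x).2 < a (g x).1 := fun x hx => by
    have := hfT x
    rw [hg x hx] at this
    simp only [T, NN, Finset.inl_mem_disjSum, Finset.mem_sigma, Finset.mem_filter,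
      Finset.mem_range] at this
    tauto
  have hx2 : ∀ x : A', x.1.1 ∈ W ∧ col x.1.1 ∧ x.1.2 < a x.1.1 := fun x => by
    have := x.2
    simp only [A', A, Finset.mem_sigma, Finset.mem_filter, Finset.mem_range] at this
    tauto
  have hg3 : ∀ x ∈ X, ¬ col (g x).1 := fun x hx => by
    have h1 := hg2 x hx
    have h2 := hx2 x
    exact (hcol _ h2.1 _ h1.1 h1.2.1).1 h2.2.1
  refine ⟨X.card, hXc, ∑ x ∈ X, (Finsupp.single x.1.1 1 + Finsupp.single (g x).1 1), ?_, ?_⟩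
  · have := ES.sum (Γ := Γ) X (fun _ => 1)
      (fun x => (Finsupp.single x.1.1 1 + Finsupp.single (g x).1 1))
      (fun x hx => ES.edge (hg2 x hx).2.1)
    simpa using this
  · intro v
    rw [Finsupp.finsetSum_apply]
    simp only [Finsupp.add_apply, Finsupp.single_apply, Finset.sum_add_distrib]
    rw [← Finset.card_filter, ← Finset.card_filter]
    by_cases hv : v ∈ W
    · rw [if_pos hv]
      by_cases hc : col v
      · have e1 : (X.filter fun x => (g x).1 = v) = ∅ := by
          refine Finset.filter_eq_empty_iff.2 fun x hx h => hg3 x hx (h ▸ hc)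
        rw [e1, Finset.card_empty, add_zero]
        refine (Finset.card_le_card_of_injOn (fun x => x.1.2) (t := Finset.range (a v)) ?_ ?_).trans
          (by simp)
        · intro x hx
          have hx : x ∈ X ∧ x.1.1 = v := by simpa using hx
          have := (hx2 x).2.2
          rw [hx.2] at this
          simpa using this
        · intro x hx y hy h
          have hx : x ∈ X ∧ x.1.1 = v := by simpa using hx
          have hy : y ∈ X ∧ y.1.1 = v := by simpa using hy
          exact Subtype.ext (Sigma.ext (hx.2.trans hy.2.symm) (heq_of_eq h))
      · have e1 : (X.filter fun x => x.1.1 = v) = ∅ := by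
          refine Finset.filter_eq_empty_iff.2 fun x hx h => hc (h ▸ (hx2 x).2.1)
        rw [e1, Finset.card_empty, zero_add]
        refine (Finset.card_le_card_of_injOn (fun x => (g x).2) (t := Finset.range (a v)) ?_ ?_).trans
          (by simp)
        · intro x hx
          have hx : x ∈ X ∧ (g x).1 = v := by simpa using hx
          have := (hg2 x hx.1).2.2
          rw [hx.2] at this
          simpa using this
        · intro x hx y hy h
          have hx : x ∈ X ∧ (g x).1 = v := by simpa using hx
          have hy : y ∈ X ∧ (g y).1 = v := by simpa using hy
          apply hf
          rw [hg x hx.1, hg y hy.1]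
          exact congrArg Sum.inl (Sigma.ext (hx.2.trans hy.2.symm) (heq_of_eq h))
    · have e1 : (X.filter fun x => x.1.1 = v) = ∅ :=
        Finset.filter_eq_empty_iff.2 fun x hx h => hv (h ▸ (hx2 x).1)
      have e2 : (X.filter fun x => (g x).1 = v) = ∅ :=
        Finset.filter_eq_empty_iff.2 fun x hx h => hv (h ▸ (hg2 x hx).1)
      rw [if_neg hv, e1, e2]
      simp

end comb

section odd
variable {σ : Type}

lemma exists_odd_cycle (Γ : SimpleGraph σ) (W : Set σ) (h : ¬ (Γ.induce W).Colorable 2) :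
    ∃ (m : ℕ) (c : ZMod m → σ), IsOddCycle Γ m c ∧ Set.range c ⊆ W := by
  classical
  rw [SimpleGraph.two_colorable_iff_forall_loop_even] at h
  push Not at h
  obtain ⟨u, w, hw⟩ := h
  let P : ℕ → Prop := fun L => Odd L ∧ ∃ f : ℕ → σ, f 0 = f L ∧ (∀ i, f i ∈ W) ∧
    ∀ i < L, Γ.Adj (f i) (f (i + 1))
  have hP : ∃ L, P L := by
    refine ⟨w.length, Nat.not_even_iff_odd.1 hw, fun i => (w.getVert i).1, by simp,
      fun i => (w.getVert i).2, fun i hi => ?_⟩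
    have := w.adj_getVert_succ hi
    simpa using this
  obtain ⟨hodd, f, h0, hW, hadj⟩ := Nat.find_spec hP
  have hmin : ∀ L < Nat.find hP, ¬ P L := fun L hL => Nat.find_min hP hL
  generalize Nat.find hP = L at *
  have hinj : ∀ i j, i < j → j < L → f i ≠ f j := by
    intro i j hij hj he
    rcases Nat.even_or_odd (j - i) with hev | ho
    · refine hmin (L - (j - i)) (by omega) ⟨?_, fun k => if k ≤ i then f k else f (k + (j - i)),
        ?_, ?_, ?_⟩
      · rw [Nat.odd_sub (by omega)]
        exact iff_of_true hodd hev
      · simp only [Nat.zero_le, if_true]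
        rw [if_neg (by omega), h0]
        congr 1; omega
      · intro k; dsimp only; split_ifs <;> exact hW _
      · intro k hk
        dsimp only
        rcases lt_trichotomy k i with h1 | rfl | h1
        · rw [if_pos (by omega), if_pos (by omega)]; exact hadj k (by omega)
        · rw [if_pos le_rfl, if_neg (by omega), he]
          have := hadj j hj
          rwa [show k + 1 + (j - k) = j + 1 by omega]
        · rw [if_neg (by omega), if_neg (by omega)]
          have := hadj (k + (j - i)) (by omega)
          rwa [show k + 1 + (j - i) = k + (j - i) + 1 by omega]
    · refine hmin (j - i) (by omega) ⟨ho, fun k => f (i + k), ?_, fun k => hW _, fun k hk => ?_⟩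
      · dsimp only; rw [add_zero, he]; congr 1; omega
      · exact hadj (i + k) (by omega)
  have hL3 : 3 ≤ L := by
    obtain ⟨r, hr⟩ := hodd
    rcases r with _ | r
    · exfalso
      have := hadj 0 (by omega)
      rw [h0] at this
      simp [hr] at this
    · omega
  have : NeZero L := ⟨by omega⟩
  refine ⟨L, fun z => f z.val, ⟨hodd, hL3, ?_, ?_⟩, ?_⟩
  · intro x y hxy
    have hx := ZMod.val_lt x
    have hy := ZMod.val_lt y
    apply ZMod.val_injective L
    rcases lt_trichotomy x.val y.val with h1 | h1 | h1
    · exact absurd hxy (hinj _ _ h1 hy)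
    · exact h1
    · exact absurd hxy.symm (hinj _ _ h1 hx)
  · intro z
    have hz := ZMod.val_lt z
    have : Fact (1 < L) := ⟨by omega⟩
    have hv : (z + 1).val = if z.val + 1 = L then 0 else z.val + 1 := by
      rw [ZMod.val_add, ZMod.val_one]
      split_ifs with h
      · rw [h, Nat.mod_self]
      · exact Nat.mod_eq_of_lt (by omega)
    have := hadj _ hz
    dsimp only
    rw [hv]
    split_ifs with h
    · rw [h0]; rwa [h] at this
    · exact this
  · rintro _ ⟨z, rfl⟩; exact hW _
end odd

section KAB
variable {σ : Type} [Fintype σ] [DecidableEq σ]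

lemma wt_anti {F G : Finset σ} (h : F ⊆ G) (a : σ →₀ ℕ) : wt G a ≤ wt F a :=
  Finset.sum_le_sum_of_subset (Finset.compl_subset_compl.2 h)

lemma lemK (Γ : SimpleGraph σ)
    (hdom : ∀ (m : ℕ) (c : ZMod m → σ), IsOddCycle Γ m c → Dominating Γ (Set.range c))
    {t : ℕ} {a : σ →₀ ℕ} {i : σ} (hi : inS Γ t a i) :
    ∃ F, IsMaxIndep Γ F ∧ i ∈ F ∧ wt F a < t := by
  classical
  let N : Finset σ := Finset.univ.filter fun j => Γ.Adj i j
  let W : Finset σ := Finset.univ.filter fun j => j ≠ i ∧ ¬ Γ.Adj i j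
  have hcol : (Γ.induce (W : Set σ)).Colorable 2 := by
    by_contra hcon
    obtain ⟨m, c, hc, hcW⟩ := exists_odd_cycle Γ _ hcon
    have h1 : ∀ z, c z ≠ i ∧ ¬ Γ.Adj i (c z) := fun z => by
      have := hcW ⟨z, rfl⟩
      simpa [W] using this
    obtain ⟨_, ⟨z, rfl⟩, h2⟩ := hdom m c hc i (by rintro ⟨z, hz⟩; exact (h1 z).1 hz)
    exact (h1 z).2 h2.symm
  obtain ⟨C⟩ := hcol
  let col : σ → Prop := fun v => ∃ h : v ∈ W, C ⟨v, h⟩ = 0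
  have hcol : ∀ u ∈ W, ∀ v ∈ W, Γ.Adj u v → (col u ↔ ¬ col v) := by
    intro u hu v hv h
    have h1 : C ⟨u, hu⟩ ≠ C ⟨v, hv⟩ := C.valid (by simpa using h)
    simp only [col, hu, hv, exists_true_left]
    generalize C ⟨u, hu⟩ = x at *
    generalize C ⟨v, hv⟩ = y at *
    omega
  let d := ∑ j ∈ N, a j
  by_cases hC : ∀ C ⊆ W, (∀ u ∈ W, ∀ v ∈ W, Γ.Adj u v → u ∈ C ∨ v ∈ C) → t - d ≤ ∑ v ∈ C, a v
  · exfalso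
    obtain ⟨s', hs', c, hc, hcv⟩ := konig Γ W col hcol a (t - d) hC
    have h2 : ES Γ (∑ j ∈ N, a j * 1)
        (∑ j ∈ N, a j • (Finsupp.single i 1 + Finsupp.single j 1)) :=
      ES.sum N _ _ fun j hj => (ES.edge (Finset.mem_filter.1 hj).2).nsmul (a j)
    have h3 := hc.add h2
    obtain ⟨c', hc', hE⟩ := h3.le t (by simp only [mul_one]; change t ≤ s' + d; omega)
    refine hi d ⟨c', hc'.trans ?_, hE⟩
    intro v
    simp only [Finsupp.add_apply, Finsupp.finsetSum_apply, Finsupp.smul_apply, Finsupp.single_apply,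
      smul_add, Finset.sum_add_distrib, smul_eq_mul, mul_ite, mul_one, mul_zero]
    have h4 := hcv v
    rw [Finset.sum_ite_eq' N v]
    by_cases hv : v = i
    · subst hv
      have : v ∉ W := by simp [W]
      have h5 : v ∉ N := by simp [N]
      rw [if_neg this] at h4
      simp only [if_true, if_neg h5]
      change c v + (d + 0) ≤ a v + d
      omega
    · simp only [if_neg (Ne.symm hv), Finset.sum_const_zero]
      by_cases h5 : v ∈ N
      · have : v ∉ W := by simp [W, N] at h5 ⊢; intro _; exact h5
        rw [if_neg this] at h4
        rw [if_pos h5]; omega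
      · rw [if_neg h5]
        split_ifs at h4 <;> omega
  · push Not at hC
    obtain ⟨C, hCW, hcov, hlt⟩ := hC
    have hind : IsIndep Γ (insert i (W \ C)) := by
      have h1 : ∀ v ∈ W \ C, ¬ Γ.Adj i v := fun v hv => by
        have := (Finset.mem_sdiff.1 hv).1
        simp only [W, Finset.mem_filter] at this
        exact this.2.2
      intro u hu v hv h
      rw [Finset.mem_insert] at hu hv
      rcases hu with rfl | hu <;> rcases hv with rfl | hv
      · exact Γ.irrefl h
      · exact h1 v hv h
      · exact h1 u hu h.symm
      · have hu := Finset.mem_sdiff.1 hu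
        have hv := Finset.mem_sdiff.1 hv
        rcases hcov u hu.1 v hv.1 h with h | h
        · exact hu.2 h
        · exact hv.2 h
    obtain ⟨F, hF, hsub⟩ := exists_max hind
    refine ⟨F, hF, hsub (by simp), (wt_anti hsub a).trans_lt ?_⟩
    have : (insert i (W \ C))ᶜ ⊆ N ∪ C := by
      intro v hv
      simp only [Finset.mem_compl, Finset.mem_insert, Finset.mem_sdiff, W, Finset.mem_filter,
        Finset.mem_univ, true_and, Finset.mem_union, N] at hv ⊢
      tauto
    have h1 : wt (insert i (W \ C)) a ≤ ∑ v ∈ N ∪ C, a v := Finset.sum_le_sum_of_subset this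
    have h2 : ∑ v ∈ N ∪ C, a v ≤ ∑ v ∈ N, a v + ∑ v ∈ C, a v := by
      rw [← Finset.sum_union_inter]; exact Nat.le_add_right _ _
    change _ ≤ d + _ at h2
    omega

/-- the existence of a good pair -/
def GoodPair (Γ : SimpleGraph σ) : Prop :=
  ∃ F G : Finset σ, IsMaxIndep Γ F ∧ IsMaxIndep Γ G ∧ Disjoint F G ∧
        (Γ.induce ((F ∪ G : Finset σ) : Set σ)).Connected

lemma lemA (Γ : SimpleGraph σ)
    (hdom : ∀ (m : ℕ) (c : ZMod m → σ), IsOddCycle Γ m c → Dominating Γ (Set.range c))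
    (hno : ¬ GoodPair Γ) {t : ℕ} {a : σ →₀ ℕ} {κ : Type*} (c : σ → κ)
    (hc : ∀ i j, inPair Γ t a i j → c i = c j) {i j : σ} (hi : inS Γ t a i) (hj : inS Γ t a j) :
    c i = c j := by
  classical
  obtain ⟨F, hF, hiF, hFt⟩ := lemK Γ hdom hi
  obtain ⟨G, hG, hjG, hGt⟩ := lemK Γ hdom hj
  by_cases hd : Disjoint F G
  swap
  · obtain ⟨v, hvF, hvG⟩ := Finset.not_disjoint_iff.1 hd
    exact (hc _ _ (pair_of hF.1 hFt hiF hvF)).trans (hc _ _ (pair_of hG.1 hGt hvG hjG))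
  have hncon : ¬ (Γ.induce ((F ∪ G : Finset σ) : Set σ)).Connected :=
    fun h => hno ⟨F, G, hF, hG, hd, h⟩
  have hFG : ∀ v ∈ F, ∃ w ∈ G, Γ.Adj v w := fun v hv => by
    obtain ⟨w, hw, h⟩ := hG.adj (Finset.disjoint_left.1 hd hv)
    exact ⟨w, hw, h.symm⟩
  have hGF : ∀ v ∈ G, ∃ w ∈ F, Γ.Adj v w := fun v hv => by
    obtain ⟨w, hw, h⟩ := hF.adj (Finset.disjoint_right.1 hd hv)
    exact ⟨w, hw, h.symm⟩
  -- a closed set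
  obtain ⟨C, hCsub, hCcl, ⟨u, hu⟩, w, hwFG, hwC⟩ : ∃ C : Set σ, C ⊆ ((F ∪ G : Finset σ) : Set σ) ∧
      (∀ u ∈ F ∪ G, ∀ v ∈ F ∪ G, Γ.Adj u v → (u ∈ C ↔ v ∈ C)) ∧ C.Nonempty ∧
      ∃ w ∈ F ∪ G, w ∉ C := by
    rw [SimpleGraph.connected_iff] at hncon
    have hne : Nonempty (((F ∪ G : Finset σ) : Set σ)) := ⟨⟨i, by simp [hiF]⟩⟩
    have : ¬ (Γ.induce ((F ∪ G : Finset σ) : Set σ)).Preconnected := fun h => hncon ⟨h, hne⟩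
    unfold SimpleGraph.Preconnected at this
    push Not at this
    obtain ⟨u, w, huw⟩ := this
    refine ⟨{v | ∃ h : v ∈ F ∪ G, (Γ.induce ((F ∪ G : Finset σ) : Set σ)).Reachable u ⟨v, h⟩},
      ?_, ?_, ⟨u.1, u.2, SimpleGraph.Reachable.refl _⟩, w.1, w.2, ?_⟩
    · rintro v ⟨h, -⟩; exact h
    · intro x hx y hy hxy
      have e : (Γ.induce ((F ∪ G : Finset σ) : Set σ)).Adj ⟨x, hx⟩ ⟨y, hy⟩ := by simpa using hxy
      constructor
      · rintro ⟨h, hr⟩; exact ⟨hy, hr.trans e.reachable⟩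
      · rintro ⟨h, hr⟩; exact ⟨hx, hr.trans e.symm.reachable⟩
    · rintro ⟨h, hr⟩; exact huw hr
  have mF : ∀ v ∈ F, v ∈ F ∪ G := fun v hv => Finset.mem_union_left _ hv
  have mG : ∀ v ∈ G, v ∈ F ∪ G := fun v hv => Finset.mem_union_right _ hv
  obtain ⟨f1, hf1, hf1C⟩ : ∃ v ∈ F, v ∈ C := by
    rcases Finset.mem_union.1 (hCsub hu) with h | h
    · exact ⟨u, h, hu⟩
    · obtain ⟨v, hv, hadj⟩ := hGF u h
      exact ⟨v, hv, (hCcl u (mG _ h) v (mF _ hv) hadj).1 hu⟩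
  obtain ⟨g1, hg1, hg1C⟩ : ∃ v ∈ G, v ∈ C := by
    obtain ⟨v, hv, hadj⟩ := hFG f1 hf1
    exact ⟨v, hv, (hCcl _ (mF _ hf1) v (mG _ hv) hadj).1 hf1C⟩
  obtain ⟨f2, hf2, hf2C⟩ : ∃ v ∈ F, v ∉ C := by
    rcases Finset.mem_union.1 hwFG with h | h
    · exact ⟨w, h, hwC⟩
    · obtain ⟨v, hv, hadj⟩ := hGF w h
      exact ⟨v, hv, fun h' => hwC ((hCcl w (mG _ h) v (mF _ hv) hadj).2 h')⟩
  obtain ⟨g2, hg2, hg2C⟩ : ∃ v ∈ G, v ∉ C := by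
    obtain ⟨v, hv, hadj⟩ := hFG f2 hf2
    exact ⟨v, hv, fun h' => hf2C ((hCcl _ (mF _ hf2) v (mG _ hv) hadj).2 h')⟩
  let H1 : Finset σ := F.filter (· ∈ C) ∪ G.filter (· ∉ C)
  let H2 : Finset σ := F.filter (· ∉ C) ∪ G.filter (· ∈ C)
  have hmix : ∀ x ∈ F, ∀ y ∈ G, (x ∈ C ↔ y ∉ C) → ¬ Γ.Adj x y := by
    intro x hx y hy h hadj
    have := hCcl x (mF _ hx) y (mG _ hy) hadj
    tauto
  have hH1 : IsIndep Γ H1 := by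
    intro x hx y hy hadj
    simp only [H1, Finset.mem_union, Finset.mem_filter] at hx hy
    rcases hx with hx | hx <;> rcases hy with hy | hy
    · exact hF.1 x hx.1 y hy.1 hadj
    · exact hmix x hx.1 y hy.1 (by tauto) hadj
    · exact hmix y hy.1 x hx.1 (by tauto) hadj.symm
    · exact hG.1 x hx.1 y hy.1 hadj
  have hH2 : IsIndep Γ H2 := by
    intro x hx y hy hadj
    simp only [H2, Finset.mem_union, Finset.mem_filter] at hx hy
    rcases hx with hx | hx <;> rcases hy with hy | hy
    · exact hF.1 x hx.1 y hy.1 hadj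
    · exact hmix x hx.1 y hy.1 (by tauto) hadj
    · exact hmix y hy.1 x hx.1 (by tauto) hadj.symm
    · exact hG.1 x hx.1 y hy.1 hadj
  have hsum : wt H1 a + wt H2 a ≤ wt F a + wt G a := by
    unfold wt
    have key : ∀ H : Finset σ, ∑ v ∈ Hᶜ, a v = ∑ v, if v ∈ H then 0 else a v := by
      intro H
      rw [Finset.sum_ite, Finset.sum_const_zero, zero_add]
      exact Finset.sum_congr (by ext; simp) fun _ _ => rfl
    rw [key, key, key, key, ← Finset.sum_add_distrib, ← Finset.sum_add_distrib]
    refine Finset.sum_le_sum fun v _ => ?_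
    have : v ∈ F → v ∉ G := fun h => Finset.disjoint_left.1 hd h
    simp only [H1, H2, Finset.mem_union, Finset.mem_filter]
    by_cases h1 : v ∈ F <;> by_cases h2 : v ∈ G <;> by_cases h3 : v ∈ C <;> simp_all
  rcases Nat.lt_or_ge (wt H1 a) t with h | h
  · calc c i = c f1 := hc _ _ (pair_of hF.1 hFt hiF hf1)
      _ = c g2 := hc _ _ (pair_of hH1 h (by simp [H1, hf1, hf1C]) (by simp [H1, hg2, hg2C]))
      _ = c j := hc _ _ (pair_of hG.1 hGt hg2 hjG)
  · calc c i = c f2 := hc _ _ (pair_of hF.1 hFt hiF hf2)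
      _ = c g1 := hc _ _ (pair_of hH2 (by omega) (by simp [H2, hf2, hf2C]) (by simp [H2, hg1, hg1C]))
      _ = c j := hc _ _ (pair_of hG.1 hGt hg1 hjG)

lemma lemB (Γ : SimpleGraph σ) (hiso : NoIsolated Γ)
    (hdom : ∀ (m : ℕ) (c : ZMod m → σ), IsOddCycle Γ m c → Dominating Γ (Set.range c))
    (hno : ¬ GoodPair Γ) {t : ℕ} {a : σ →₀ ℕ} {i : σ} (hi : inS Γ t a i) :
    ∃ j, j ≠ i ∧ inPair Γ t a i j := by
  classical
  obtain ⟨F, hF, hiF, hFt⟩ := lemK Γ hdom hi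
  by_cases h : ∃ j ∈ F, j ≠ i
  · obtain ⟨j, hj, hji⟩ := h
    exact ⟨j, hji, pair_of hF.1 hFt hiF hj⟩
  exfalso
  push Not at h
  obtain ⟨u, hu⟩ := hiso i
  have hall : ∀ j, j ≠ i → Γ.Adj i j := by
    intro j hj
    obtain ⟨v, hv, hadj⟩ := hF.adj (j := j) (fun hjF => hj (h j hjF))
    rwa [h v hv] at hadj
  obtain ⟨G, hG, huG⟩ := exists_max (Γ := Γ) (F := {u}) (by
    intro x hx y hy
    rw [Finset.mem_singleton] at hx hy
    subst hx; subst hy; exact Γ.irrefl)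
  have huG : u ∈ G := huG (by simp)
  have hiG : i ∉ G := fun hiG => hG.1 i hiG u huG hu
  refine hno ⟨F, G, hF, hG, ?_, ?_⟩
  · rw [Finset.disjoint_left]
    intro v hv; rw [h v hv]; exact hiG
  · rw [SimpleGraph.connected_iff_exists_forall_reachable]
    refine ⟨⟨i, by simp [hiF]⟩, fun w => ?_⟩
    by_cases hw : w.1 = i
    · have : w = ⟨i, by simp [hiF]⟩ := Subtype.ext hw
      rw [this]
    · apply SimpleGraph.Adj.reachable
      simpa using hall _ hw
end KAB

section alg
variable {σ : Type} (k : Type) [Field k]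

lemma edgeIdeal_pow_eq (Γ : SimpleGraph σ) (t : ℕ) :
    (edgeIdeal k Γ) ^ t = Ideal.span ((fun b => monomial b (1 : k)) '' {b | ES Γ t b}) := by
  induction t with
  | zero =>
    rw [pow_zero, Ideal.one_eq_top, eq_comm, Ideal.eq_top_iff_one]
    exact Ideal.subset_span ⟨0, ES.zero, rfl⟩
  | succ t ih =>
    rw [pow_succ, ih, edgeIdeal, Ideal.span_mul_span']
    congr 1
    ext f
    constructor
    · rintro ⟨_, ⟨b, hb, rfl⟩, _, ⟨i, j, hij, rfl⟩, rfl⟩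
      refine ⟨_, ES.succ hb hij, ?_⟩
      simp [X, monomial_mul]
    · rintro ⟨b, hb, rfl⟩
      cases hb with
      | @succ _ b i j hb hij =>
        refine ⟨_, ⟨b, hb, rfl⟩, _, ⟨i, j, hij, rfl⟩, ?_⟩
        simp [X, monomial_mul]

lemma mem_pow_iff (Γ : SimpleGraph σ) (t : ℕ) (f : MvPolynomial σ k) :
    f ∈ (edgeIdeal k Γ) ^ t ↔ ∀ b, ¬ InP Γ t b → coeff b f = 0 := by
  rw [edgeIdeal_pow_eq, mem_ideal_span_monomial_image]
  constructor
  · intro h b hb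
    by_contra hne
    obtain ⟨c, hc, hcb⟩ := h b (mem_support_iff.2 hne)
    exact hb ⟨c, hcb, hc⟩
  · intro h b hb
    by_contra hne
    refine mem_support_iff.1 hb (h b ?_)
    rintro ⟨c, hcb, hc⟩
    exact hne ⟨c, hc, hcb⟩

variable {k}

lemma coeff_Xpow_mul (b : σ →₀ ℕ) (i : σ) (s : ℕ) (f : MvPolynomial σ k) :
    coeff (b + Finsupp.single i s) (X i ^ s * f) = coeff b f := by
  rw [X_pow_eq_monomial, add_comm, coeff_monomial_mul, one_mul]

lemma coeff_Xpow_mul_of_lt {b : σ →₀ ℕ} {i : σ} {s : ℕ} (h : b i < s) (f : MvPolynomial σ k) :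
    coeff b (X i ^ s * f) = 0 := by
  rw [X_pow_eq_monomial, coeff_monomial_mul', if_neg]
  intro hle
  have := hle i
  simp at this
  omega

variable [Fintype σ] [DecidableEq σ]

lemma glue (Γ : SimpleGraph σ) (hiso : NoIsolated Γ)
    (hdom : ∀ (m : ℕ) (c : ZMod m → σ), IsOddCycle Γ m c → Dominating Γ (Set.range c))
    (hno : ¬ GoodPair Γ) (t s : ℕ) (y : σ → MvPolynomial σ k)
    (hy : ∀ i j, X j ^ s * y i - X i ^ s * y j ∈ (edgeIdeal k Γ) ^ t) :
    ∃ (h : MvPolynomial σ k) (N : ℕ), ∀ i, X i ^ N * (y i - X i ^ s * h) ∈ (edgeIdeal k Γ) ^ t := by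
  classical
  let cc : (σ →₀ ℕ) → k := fun a =>
    if h : ∃ i, inS Γ t a i then coeff (a + Finsupp.single h.choose s) (y h.choose) else 0
  have hcc : ∀ a i, inS Γ t a i → cc a = coeff (a + Finsupp.single i s) (y i) := by
    intro a i hi
    have hex : ∃ i, inS Γ t a i := ⟨i, hi⟩
    simp only [cc, dif_pos hex]
    refine lemA Γ hdom hno (fun i => coeff (a + Finsupp.single i s) (y i)) ?_ hex.choose_spec hi
    intro i j hij
    have := (mem_pow_iff k Γ t _).1 (hy i j) _ (hij s)
    rw [coeff_sub, coeff_Xpow_mul, add_right_comm, coeff_Xpow_mul] at this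
    exact sub_eq_zero.1 this
  let S : Finset (σ →₀ ℕ) :=
    Finset.univ.biUnion fun i => (y i).support.image fun b => b - Finsupp.single i s
  let h : MvPolynomial σ k := ∑ a ∈ S, monomial a (cc a)
  have hh : ∀ a, coeff a h = cc a := by
    intro a
    simp only [h, coeff_sum, coeff_monomial]
    rw [Finset.sum_ite_eq' S a]
    split_ifs with haS
    · rfl
    · by_contra hne
      apply haS
      by_cases hex : ∃ i, inS Γ t a i
      · obtain ⟨i, hi⟩ := hex
        rw [hcc a i hi] at hne
        refine Finset.mem_biUnion.2 ⟨i, Finset.mem_univ _, Finset.mem_image.2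
          ⟨_, mem_support_iff.2 (Ne.symm hne), by simp⟩⟩
      · exact absurd (by simp only [cc, dif_neg hex]) hne
  have key : ∀ i b, coeff b (y i - X i ^ s * h) ≠ 0 → ∃ N, InP Γ t (b + Finsupp.single i N) := by
    intro i b hb
    by_contra! hcon
    have hS : inS Γ t b i := hcon
    rcases Nat.lt_or_ge (b i) s with hlt | hge
    · rw [coeff_sub, coeff_Xpow_mul_of_lt hlt, sub_zero] at hb
      obtain ⟨j, hji, hij⟩ := lemB Γ hiso hdom hno hS
      have h1 : ¬ InP Γ t (b + Finsupp.single j s) := fun h => hij s (h.mono (by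
        rw [add_right_comm]; exact le_self_add))
      have := (mem_pow_iff k Γ t _).1 (hy i j) _ h1
      rw [coeff_sub, coeff_Xpow_mul, coeff_Xpow_mul_of_lt, sub_zero] at this
      · exact hb this
      · simpa [Finsupp.single_apply, hji] using hlt
    · obtain ⟨a, rfl⟩ : ∃ a, b = a + Finsupp.single i s :=
        ⟨b - Finsupp.single i s, (tsub_add_cancel_of_le (by
          simpa [Finsupp.single_le_iff] using hge)).symm⟩
      apply hb
      rw [coeff_sub, coeff_Xpow_mul, hh, hcc a i, sub_self]
      intro N hN
      exact hS N (hN.mono (by rw [add_right_comm]; exact le_self_add))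
  choose! Nf hNf using key
  refine ⟨h, ∑ i, ∑ b ∈ (y i - X i ^ s * h).support, Nf i b, fun i => ?_⟩
  set N := ∑ i, ∑ b ∈ (y i - X i ^ s * h).support, Nf i b
  rw [mem_pow_iff]
  intro b hb
  by_contra hne
  rcases Nat.lt_or_ge (b i) N with hlt | hge
  · exact hne (coeff_Xpow_mul_of_lt hlt _)
  · obtain ⟨a, rfl⟩ : ∃ a, b = a + Finsupp.single i N :=
      ⟨b - Finsupp.single i N, (tsub_add_cancel_of_le (by
        simpa [Finsupp.single_le_iff] using hge)).symm⟩
    rw [coeff_Xpow_mul] at hne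
    refine hb ((hNf i a hne).mono (add_le_add_right (Finsupp.single_le_single.2 ?_) a))
    exact (Finset.single_le_sum (f := fun b => Nf i b) (fun _ _ => Nat.zero_le _)
      (mem_support_iff.2 hne)).trans
      (Finset.single_le_sum (f := fun i => ∑ b ∈ (y i - X i ^ s * h).support, Nf i b)
        (fun _ _ => Nat.zero_le _) (Finset.mem_univ i))

lemma X_pow_mem (i : σ) (s : ℕ) : (X i : MvPolynomial σ k) ^ s ∈ maxIdeal k σ ^ s :=
  Ideal.pow_mem_pow (show X i ∈ Ideal.span (Set.range X) from Ideal.subset_span ⟨i, rfl⟩) s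

lemma forward (Γ : SimpleGraph σ) (hiso : NoIsolated Γ)
    (hdom : ∀ (m : ℕ) (c : ZMod m → σ), IsOddCycle Γ m c → Dominating Γ (Set.range c))
    (hno : ¬ GoodPair Γ) (t s : ℕ)
    (φ : (maxIdeal k σ ^ s : Ideal _) →ₗ[MvPolynomial σ k] (MvPolynomial σ k ⧸ (edgeIdeal k Γ) ^ t)) :
    ∃ (s' : ℕ) (hs : s ≤ s') (x : MvPolynomial σ k ⧸ (edgeIdeal k Γ) ^ t),
      ∀ r : (maxIdeal k σ ^ s' : Ideal _),
        φ (Submodule.inclusion (Ideal.pow_le_pow_right hs) r) = (r : MvPolynomial σ k) • x := by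
  classical
  have hex : ∀ i, ∃ y : MvPolynomial σ k,
      Ideal.Quotient.mk ((edgeIdeal k Γ) ^ t) y = φ ⟨X i ^ s, X_pow_mem i s⟩ :=
    fun i => Ideal.Quotient.mk_surjective _
  choose y hyφ using hex
  have smk : ∀ r f : MvPolynomial σ k, r • Ideal.Quotient.mk ((edgeIdeal k Γ) ^ t) f =
      Ideal.Quotient.mk ((edgeIdeal k Γ) ^ t) (r * f) := fun r f => rfl
  obtain ⟨h, N, hN⟩ := glue Γ hiso hdom hno t s y (by
    intro i j
    rw [← Ideal.Quotient.eq, ← smk, ← smk, hyφ, hyφ, ← map_smul, ← map_smul]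
    congr 1
    exact Subtype.ext (mul_comm _ _))
  let x := Ideal.Quotient.mk ((edgeIdeal k Γ) ^ t) h
  let ψ : (maxIdeal k σ ^ s : Ideal _) →ₗ[MvPolynomial σ k]
      (MvPolynomial σ k ⧸ (edgeIdeal k Γ) ^ t) :=
    (LinearMap.toSpanSingleton _ _ x) ∘ₗ (Submodule.subtype _)
  let T : Ideal (MvPolynomial σ k) :=
    Submodule.map (Submodule.subtype _) (LinearMap.eqLocus φ ψ)
  have hT : ∀ i, (X i : MvPolynomial σ k) ^ (N + s) ∈ T := by
    intro i
    refine ⟨(X i : MvPolynomial σ k) ^ N •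
      (⟨X i ^ s, X_pow_mem i s⟩ : (maxIdeal k σ ^ s : Ideal _)), ?_, ?_⟩
    · rw [SetLike.mem_coe, LinearMap.mem_eqLocus, map_smul, map_smul, ← hyφ]
      change _ = (X i : MvPolynomial σ k) ^ N • ((X i : MvPolynomial σ k) ^ s • x)
      rw [smk, smk, smk, Ideal.Quotient.eq, ← mul_sub]
      exact hN i
    · simp [pow_add]
  have hrad : maxIdeal k σ ≤ T.radical := by
    refine Ideal.span_le.2 ?_
    rintro _ ⟨i, rfl⟩
    exact ⟨N + s, hT i⟩
  obtain ⟨s0, hs0⟩ := Ideal.exists_pow_le_of_le_radical_of_fg hrad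
    (isNoetherian_def.1 (inferInstance : IsNoetherianRing (MvPolynomial σ k)) _)
  refine ⟨max s s0, le_max_left _ _, x, fun r => ?_⟩
  obtain ⟨q, hq, hqr⟩ := hs0 (Ideal.pow_le_pow_right (le_max_right s s0) r.2)
  have : Submodule.inclusion (Ideal.pow_le_pow_right (le_max_left s s0)) r = q :=
    Subtype.ext hqr.symm
  rw [this]
  have h2 : φ q = ψ q := hq
  rw [h2, ← hqr]
  rfl

end alg

section back
variable {σ : Type}

/-- edge vector -/
def evec {U : Set σ} : Sym2 U → (σ →₀ ℕ) :=
  Sym2.lift ⟨fun u v => Finsupp.single u.1 1 + Finsupp.single v.1 1, fun _ _ => add_comm _ _⟩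

lemma evec_mk {U : Set σ} (u v : U) :
    evec s(u, v) = Finsupp.single u.1 1 + Finsupp.single v.1 1 := rfl

variable [Fintype σ] [DecidableEq σ]

lemma walk_lemma (Γ : SimpleGraph σ) {U : Set σ} {T : SimpleGraph U} (hT : T ≤ Γ.induce U)
    (F : Finset σ) (hF : ∀ u v : U, T.Adj u v → (u.1 ∈ F ↔ v.1 ∉ F)) {u w : U} (p : T.Walk u w) :
    w.1 ∈ F →
    (u.1 ∈ F → ∃ c, ES Γ p.length c ∧
      (p.edges.map evec).sum + Finsupp.single u.1 1 = c + Finsupp.single w.1 1) ∧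
    (u.1 ∉ F → ∃ c m, p.length = m + 1 ∧ ES Γ m c ∧
      (p.edges.map evec).sum = c + Finsupp.single u.1 1 + Finsupp.single w.1 1) := by
  induction p with
  | nil =>
    intro hw
    exact ⟨fun _ => ⟨0, ES.zero, by simp⟩, fun h => absurd hw h⟩
  | @cons u x w h p ih =>
    intro hw
    obtain ⟨ih1, ih2⟩ := ih hw
    have hux := hF u x h
    have hadj : Γ.Adj u.1 x.1 := by simpa using hT h
    constructor
    · intro hu
      obtain ⟨c, m, hm, hc, hs⟩ := ih2 (hux.1 hu)
      refine ⟨c + 2 • (Finsupp.single u.1 1 + Finsupp.single x.1 1), ?_, ?_⟩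
      · have := hc.add ((ES.edge hadj).nsmul 2)
        rw [SimpleGraph.Walk.length_cons, hm]
        exact this
      · rw [SimpleGraph.Walk.edges_cons, List.map_cons, List.sum_cons, hs, evec_mk, two_nsmul]
        abel
    · intro hu
      obtain ⟨c, hc, hs⟩ := ih1 (by tauto)
      refine ⟨c, p.length, rfl, hc, ?_⟩
      rw [SimpleGraph.Walk.edges_cons, List.map_cons, List.sum_cons, evec_mk, add_assoc,
        add_comm (Finsupp.single x.1 1), hs]
      abel

lemma exists_a (Γ : SimpleGraph σ) {F G : Finset σ} (hF : IsMaxIndep Γ F) (hG : IsMaxIndep Γ G)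
    (hd : Disjoint F G) (hconn : (Γ.induce ((F ∪ G : Finset σ) : Set σ)).Connected)
    {t : ℕ} (ht : F.card + G.card ≤ t) :
    F.Nonempty ∧ G.Nonempty ∧ ∃ a : σ →₀ ℕ, wt F a < t ∧ wt G a < t ∧
      ∀ i ∈ F, ∀ j ∉ F, InP Γ t (a + Finsupp.single i 1 + Finsupp.single j 1) := by
  classical
  obtain ⟨x, hx, y, hy, hxy⟩ : ∃ x ∈ F, ∃ y ∈ G, Γ.Adj x y := by
    obtain ⟨u, hu⟩ := hconn.nonempty
    rcases Finset.mem_union.1 hu with h | h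
    · obtain ⟨w, hw, h'⟩ := hG.adj (Finset.disjoint_left.1 hd h)
      exact ⟨u, h, w, hw, h'.symm⟩
    · obtain ⟨w, hw, h'⟩ := hF.adj (Finset.disjoint_right.1 hd h)
      exact ⟨w, hw, u, h, h'⟩
  refine ⟨⟨x, hx⟩, ⟨y, hy⟩, ?_⟩
  obtain ⟨T, hTle, hT⟩ := hconn.exists_isTree_le
  have hcard : T.edgeFinset.card + 1 = F.card + G.card := by
    rw [hT.card_edgeFinset, ← Finset.card_union_of_disjoint hd]
    simp
  have hadj : ∀ u v, T.Adj u v → Γ.Adj u.1 v.1 := fun u v h => by simpa using hTle h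
  have hFG : ∀ u v, Γ.Adj u v → u ∈ F ∪ G → v ∈ F ∪ G →
      ((u ∈ F ↔ v ∉ F) ∧ (u ∈ G ↔ v ∉ G)) := by
    intro u v h hu hv
    have h1 := hF.1 u
    have h2 := hG.1 u
    have h3 : u ∈ F → u ∉ G := fun h => Finset.disjoint_left.1 hd h
    have h4 : v ∈ F → v ∉ G := fun h => Finset.disjoint_left.1 hd h
    have h5 := h1 
    have h6 : u ∈ F → v ∉ F := fun hu hv => hF.1 u hu v hv h
    have h7 : u ∈ G → v ∉ G := fun hu hv => hG.1 u hu v hv h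
    rw [Finset.mem_union] at hu hv
    tauto
  have hwt : ∀ u v, Γ.Adj u v → u ∈ F ∪ G → v ∈ F ∪ G →
      wt F (Finsupp.single u 1 + Finsupp.single v 1) = 1 ∧
      wt G (Finsupp.single u 1 + Finsupp.single v 1) = 1 := by
    intro u v h hu hv
    obtain ⟨h1, h2⟩ := hFG u v h hu hv
    rw [wt_add, wt_add, wt_single, wt_single, wt_single, wt_single]
    constructor
    · by_cases h : u ∈ F <;> by_cases h' : v ∈ F <;> simp_all
    · by_cases h : u ∈ G <;> by_cases h' : v ∈ G <;> simp_all
  have hES : ∀ S ⊆ T.edgeFinset, ES Γ S.card (∑ e ∈ S, evec e) := by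
    intro S hS
    have := ES.sum (Γ := Γ) S (fun _ => 1) evec (by
      intro e he
      have he := SimpleGraph.mem_edgeFinset.1 (hS he)
      induction e with
      | h u v => exact ES.edge (hadj u v he))
    simpa using this
  have hwsum : ∀ (H : Finset σ) (S : Finset (Sym2 ((F ∪ G : Finset σ) : Set σ))),
      wt H (∑ e ∈ S, evec e) = ∑ e ∈ S, wt H (evec e) := by
    intro H S
    induction S using Finset.induction_on with
    | empty => simp [wt]
    | insert e S he ih => rw [Finset.sum_insert he, Finset.sum_insert he, wt_add, ih]
  have hwe : ∀ e ∈ T.edgeFinset, wt F (evec e) = 1 ∧ wt G (evec e) = 1 := by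
    intro e he
    have he := SimpleGraph.mem_edgeFinset.1 he
    induction e with
    | h u v => exact hwt _ _ (hadj u v he) u.2 v.2
  have hsmul : ∀ (H : Finset σ) (n : ℕ) (b : σ →₀ ℕ), wt H (n • b) = n * wt H b := by
    intro H n b
    simp [wt, Finset.mul_sum]
  let r := t - (F.card + G.card)
  let ext : σ →₀ ℕ := r • (Finsupp.single x 1 + Finsupp.single y 1)
  have hext : ES Γ r ext := by
    have := (ES.edge hxy).nsmul r
    rwa [mul_one] at this
  have hwx := hwt x y hxy (Finset.mem_union_left _ hx) (Finset.mem_union_right _ hy)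
  refine ⟨∑ e ∈ T.edgeFinset, evec e + ext, ?_, ?_, ?_⟩
  · rw [wt_add, hwsum, hsmul, hwx.1, Finset.sum_congr rfl fun e he => (hwe e he).1]
    simp only [Finset.sum_const, smul_eq_mul, mul_one]
    omega
  · rw [wt_add, hwsum, hsmul, hwx.2, Finset.sum_congr rfl fun e he => (hwe e he).2]
    simp only [Finset.sum_const, smul_eq_mul, mul_one]
    omega
  · intro i hi j hj
    obtain ⟨i0, hi0, hij⟩ := hF.adj hj
    obtain ⟨p, hp, -⟩ := hT.existsUnique_path ⟨i, Finset.mem_union_left _ hi⟩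
      ⟨i0, Finset.mem_union_left _ hi0⟩
    obtain ⟨c, hc, hs⟩ := (walk_lemma Γ hTle F
      (fun u v h => (hFG u.1 v.1 (hadj u v h) u.2 v.2).1) p hi0).1 hi
    have hnd := hp.isTrail.edges_nodup
    have hsub : p.edges.toFinset ⊆ T.edgeFinset := by
      intro e he
      rw [SimpleGraph.mem_edgeFinset]
      exact p.edges_subset_edgeSet (List.mem_toFinset.1 he)
    have hsum : ∑ e ∈ p.edges.toFinset, evec e = (p.edges.map evec).sum :=
      List.sum_toFinset _ hnd
    have hlen : p.edges.toFinset.card = p.length := by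
      rw [List.toFinset_card_of_nodup hnd, SimpleGraph.Walk.length_edges]
    have hE := ((hES (T.edgeFinset \ p.edges.toFinset) Finset.sdiff_subset).add hc).add
      ((ES.edge hij).add hext)
    have hcs := Finset.card_sdiff_add_card_eq_card hsub
    have hE' : (T.edgeFinset \ p.edges.toFinset).card + p.length + (1 + r) = t := by omega
    rw [hE'] at hE
    refine ⟨_, le_of_eq ?_, hE⟩
    · rw [← Finset.sum_sdiff hsub, hsum]
      have : ∀ A P E I J C K : σ →₀ ℕ, P + I = C + K → A + C + (K + J + E) = A + P + E + I + J := by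
        intro A P E I J C K h
        calc A + C + (K + J + E) = A + (C + K) + J + E := by abel
          _ = A + (P + I) + J + E := by rw [h]
          _ = _ := by abel
      exact this _ _ _ _ _ _ _ hs

variable {k : Type} [Field k]

lemma backward (Γ : SimpleGraph σ) {F G : Finset σ} (hF : IsMaxIndep Γ F) (hG : IsMaxIndep Γ G)
    (hd : Disjoint F G) (hconn : (Γ.induce ((F ∪ G : Finset σ) : Set σ)).Connected)
    {t : ℕ} (ht : F.card + G.card ≤ t) :
    ∃ φ : (maxIdeal k σ ^ 1 : Ideal _) →ₗ[MvPolynomial σ k]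
        (MvPolynomial σ k ⧸ (edgeIdeal k Γ) ^ t),
      ∀ (s' : ℕ) (hs : 1 ≤ s') (x : MvPolynomial σ k ⧸ (edgeIdeal k Γ) ^ t),
      ∃ r : (maxIdeal k σ ^ s' : Ideal _),
        φ (Submodule.inclusion (Ideal.pow_le_pow_right hs) r) ≠ (r : MvPolynomial σ k) • x := by
  classical
  obtain ⟨⟨i, hi⟩, ⟨g, hg⟩, a, haF, haG, hIn⟩ := exists_a Γ hF hG hd hconn ht
  let ρ : MvPolynomial σ k →ₐ[k] MvPolynomial σ k := aeval fun v => if v ∈ F then X v else 0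
  have hρ : ∀ v, ρ (X v) = if v ∈ F then X v else 0 := fun v => aeval_X _ v
  let P : Ideal (MvPolynomial σ k) := Ideal.span {m | ∃ j ∉ F, m = X j}
  let Q : Ideal (MvPolynomial σ k) := Ideal.span {m | ∃ j ∈ F, m = X j}
  have hP : ∀ r, ρ r - r ∈ P := by
    intro r
    rw [← Ideal.Quotient.eq]
    have : (Ideal.Quotient.mkₐ k P).comp ρ = Ideal.Quotient.mkₐ k P := by
      apply MvPolynomial.algHom_ext
      intro v
      rw [AlgHom.comp_apply, hρ]
      split_ifs with hv
      · rfl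
      · rw [map_zero, eq_comm]
        exact Ideal.Quotient.eq_zero_iff_mem.2 (Ideal.subset_span ⟨v, hv, rfl⟩)
    exact DFunLike.congr_fun this r
  have hQ : ∀ f ∈ maxIdeal k σ, ρ f ∈ Q := by
    have : maxIdeal k σ ≤ Q.comap ρ := by
      refine Ideal.span_le.2 ?_
      rintro _ ⟨v, rfl⟩
      rw [SetLike.mem_coe, Ideal.mem_comap, hρ]
      split_ifs with hv
      · exact Ideal.subset_span ⟨v, hv, rfl⟩
      · exact Q.zero_mem
    exact this
  have hPQ : ∀ p ∈ P, ∀ q ∈ Q, monomial a (1 : k) * (p * q) ∈ edgeIdeal k Γ ^ t := by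
    have : P * Q ≤ Submodule.comap (LinearMap.mulLeft (MvPolynomial σ k) (monomial a (1 : k)))
        (edgeIdeal k Γ ^ t) := by
      rw [Ideal.span_mul_span']
      refine Ideal.span_le.2 ?_
      rintro _ ⟨_, ⟨u, hu, rfl⟩, _, ⟨v, hv, rfl⟩, rfl⟩
      rw [SetLike.mem_coe, Submodule.mem_comap, LinearMap.mulLeft_apply, mem_pow_iff]
      intro b hb
      have e : monomial a (1 : k) * ((fun x y => x * y) (X u) (X v)) =
          monomial (a + Finsupp.single v 1 + Finsupp.single u 1) 1 := by
        simp only [X, monomial_mul, one_mul]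
        rw [add_assoc a, add_comm (Finsupp.single v 1)]
      rw [e, coeff_monomial, if_neg]
      rintro rfl
      exact hb (hIn v hv u hu)
    intro p hp q hq
    exact this (Ideal.mul_mem_mul hp hq)
  let φ : (maxIdeal k σ ^ 1 : Ideal _) →ₗ[MvPolynomial σ k]
      (MvPolynomial σ k ⧸ (edgeIdeal k Γ) ^ t) :=
    { toFun := fun f => Ideal.Quotient.mk _ (monomial a (1 : k) * ρ f.1)
      map_add' := fun f g => by
        rw [Submodule.coe_add, map_add, mul_add, map_add]
      map_smul' := fun r f => by
        change Ideal.Quotient.mk _ (monomial a (1 : k) * ρ (r * f.1)) =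
          Ideal.Quotient.mk _ (r * (monomial a (1 : k) * ρ f.1))
        rw [Ideal.Quotient.eq, map_mul]
        have h1 := hPQ _ (hP r) _ (hQ f.1 ((pow_one (maxIdeal k σ)).le f.2))
        convert h1 using 1
        ring }
  refine ⟨φ, fun s' hs x => ?_⟩
  by_contra! hcon
  obtain ⟨h, rfl⟩ := Ideal.Quotient.mk_surjective x
  have hcon' : ∀ v, monomial a (1 : k) * ρ (X v ^ s') - X v ^ s' * h ∈ edgeIdeal k Γ ^ t := by
    intro v
    rw [← Ideal.Quotient.eq]
    exact hcon ⟨X v ^ s', X_pow_mem v s'⟩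
  have hni : ¬ InP Γ t (a + Finsupp.single i s') := by
    intro hh
    have := hh.wt hF.1
    rw [wt_add, wt_single, if_pos hi] at this
    omega
  have hng : ¬ InP Γ t (a + Finsupp.single g s') := by
    intro hh
    have := hh.wt hG.1
    rw [wt_add, wt_single, if_pos hg] at this
    omega
  have e1 := (mem_pow_iff k Γ t _).1 (hcon' i) _ hni
  have e2 := (mem_pow_iff k Γ t _).1 (hcon' g) _ hng
  rw [map_pow, hρ, if_pos hi, mul_comm, coeff_sub, coeff_Xpow_mul, coeff_Xpow_mul,
    coeff_monomial, if_pos rfl] at e1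
  rw [map_pow, hρ, if_neg (Finset.disjoint_right.1 hd hg), zero_pow (by omega), mul_zero, zero_sub,
    coeff_neg, coeff_Xpow_mul, neg_eq_zero] at e2
  rw [e2, sub_zero] at e1
  exact one_ne_zero e1

end back

/-- Let `Γ` be a connected non-bipartite graph in which the vertex set
of every odd cycle is dominating. Then `H^1_m(R/I^t) ≠ 0` for some `t ≥ 1` if and only if
`Γ` has two disjoint maximal independent sets `F, G` with `Γ_{F ∪ G}` connected; in this
case `H^1_m(R/I^t) ≠ 0` for all `t ≥ |F| + |G|`. -/
theorem stmt7 (k : Type) [Field k] (n : ℕ) (Γ : SimpleGraph (Fin n))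
    (hiso : NoIsolated Γ) (hconn : Γ.Connected) (hnb : ¬ Γ.Colorable 2)
    (hdom : ∀ (m : ℕ) (c : ZMod m → Fin n), IsOddCycle Γ m c →
      Dominating Γ (Set.range c)) :
    ((∃ t : ℕ, 1 ≤ t ∧ Nontrivial (locCoh k ((edgeIdeal k Γ) ^ t) 1)) ↔
      ∃ F G : Finset (Fin n), IsMaxIndep Γ F ∧ IsMaxIndep Γ G ∧ Disjoint F G ∧
        (Γ.induce ((F ∪ G : Finset (Fin n)) : Set (Fin n))).Connected) ∧
    (∀ F G : Finset (Fin n), IsMaxIndep Γ F → IsMaxIndep Γ G → Disjoint F G →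
      (Γ.induce ((F ∪ G : Finset (Fin n)) : Set (Fin n))).Connected →
      ∀ t : ℕ, F.card + G.card ≤ t →
        Nontrivial (locCoh k ((edgeIdeal k Γ) ^ t) 1)) := by
  have hback : ∀ F G : Finset (Fin n), IsMaxIndep Γ F → IsMaxIndep Γ G → Disjoint F G →
      (Γ.induce ((F ∪ G : Finset (Fin n)) : Set (Fin n))).Connected →
      ∀ t : ℕ, F.card + G.card ≤ t →
        Nontrivial (locCoh k ((edgeIdeal k Γ) ^ t) 1) := by
    intro F G hF hG hd hc t ht
    obtain ⟨φ, hφ⟩ := backward (k := k) Γ hF hG hd hc ht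
    exact (LC.nontrivial_iff (maxIdeal k (Fin n))
      (ModuleCat.of _ (MvPolynomial (Fin n) k ⧸ (edgeIdeal k Γ) ^ t))).2 ⟨1, φ, hφ⟩
  refine ⟨⟨?_, ?_⟩, hback⟩
  · rintro ⟨t, -, hnt⟩
    by_contra hno
    obtain ⟨s, φ, hφ⟩ := (LC.nontrivial_iff (maxIdeal k (Fin n))
      (ModuleCat.of _ (MvPolynomial (Fin n) k ⧸ (edgeIdeal k Γ) ^ t))).1 hnt
    obtain ⟨s', hs, x, hx⟩ := forward Γ hiso hdom hno t s φ
    obtain ⟨r, hr⟩ := hφ s' hs x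
    exact hr (hx r)
  · rintro ⟨F, G, hF, hG, hd, hc⟩
    refine ⟨F.card + G.card, ?_, hback F G hF hG hd hc _ le_rfl⟩
    have := Finset.card_pos.2 (exists_a Γ hF hG hd hc le_rfl).1
    omega

end
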